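/- arXiv:math/0401300 — 2 statements merged into one kernel-verified Lean document; each statement's English description precedes it below -/
import Mathlib

section
/- For every nonnegative integer n, T(2,n) = 4·C_n − C_{n+1} (as an identity of rational numbers; here T(2,n) = 6·(2n)!/(n!·(n+2)!)). -/
/-- The super Catalan number `T(m,n) = (1/2) * (2m)! * (2n)! / (m! * n! * (m+n)!)`,
as a rational number. -/
def superCatalan (m n : ℕ) : ℚ :=
  (Nat.factorial (2 * m) * Nat.factorial (2 * n) : ℚ) /
    (2 * (Nat.factorial m * Nat.factorial n * Nat.factorial (m + n)))

/-!
The super Catalan numbers satisfy `(m + n + 1) T(m + 1, n) = 2 (2m + 1) T(m, n)` and are symmetric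
in `m` and `n`. Adding this relation to its mirror image gives the Pascal-like recurrence
`T(m + 1, n) + T(m, n + 1) = 4 T(m, n)`. At `m = 0` the relation gives `T(1, n) = C_n`, so the
recurrence at `m = 1` expresses `T(2, n)` through Catalan numbers.
-/

open scoped Nat

theorem superCatalan_comm (m n : ℕ) : superCatalan m n = superCatalan n m := by
  rw [superCatalan, superCatalan, add_comm n m, mul_comm (n ! : ℚ), mul_comm ((2 * n)! : ℚ)]

theorem two_mul_superCatalan_zero_left (n : ℕ) : 2 * superCatalan 0 n = n.centralBinom := by
  rw [superCatalan, Nat.centralBinom_eq_two_mul_choose, two_mul n, Nat.cast_add_choose]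
  simp [mul_div_mul_left, ← mul_div_assoc]

theorem add_add_one_mul_superCatalan_succ_left (m n : ℕ) :
    (m + n + 1) * superCatalan (m + 1) n = 2 * (2 * m + 1) * superCatalan m n := by
  have : (m + n + 1 : ℚ) ≠ 0 := by positivity
  rw [superCatalan, superCatalan, mul_add_one, add_right_comm m 1 n]
  simp only [Nat.factorial_succ]
  push_cast
  field_simp
  ring

theorem superCatalan_succ_left_add_superCatalan_succ_right (m n : ℕ) :
    superCatalan (m + 1) n + superCatalan m (n + 1) = 4 * superCatalan m n := by
  have left := add_add_one_mul_superCatalan_succ_left m n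
  have right := add_add_one_mul_superCatalan_succ_left n m
  rw [superCatalan_comm (n + 1) m, superCatalan_comm n m] at right
  have : (m + n + 1 : ℚ) ≠ 0 := by positivity
  apply mul_left_cancel₀ this
  linear_combination left + right

theorem superCatalan_one_left (n : ℕ) : superCatalan 1 n = catalan n := by
  have : (n + 1 : ℚ) ≠ 0 := by positivity
  apply mul_left_cancel₀ this
  calc (n + 1 : ℚ) * superCatalan 1 n
    _ = 2 * superCatalan 0 n := by simpa using add_add_one_mul_superCatalan_succ_left 0 n
    _ = n.centralBinom := two_mul_superCatalan_zero_left n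
    _ = (n + 1) * catalan n := by exact_mod_cast (succ_mul_catalan_eq_centralBinom n).symm

theorem superCatalan_two (n : ℕ) :
    superCatalan 2 n = 4 * (catalan n : ℚ) - (catalan (n + 1) : ℚ) := by
  rw [← superCatalan_one_left, ← superCatalan_one_left]
  exact eq_sub_of_add_eq (superCatalan_succ_left_add_superCatalan_succ_right 1 n)
end

section
/- For every integer k ≥ 0, the identity (1 − C^{k+2})·G_k = (1 + C)·(1 − C^{k+1}) holds in ℚ[[X]]. -/
/-- A ballot path: a sequence of steps, each `+1` or `-1`, all of whose
partial sums are nonnegative. -/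
def IsBallot (P : List ℤ) : Prop :=
  (∀ s ∈ P, s = 1 ∨ s = -1) ∧ ∀ k, 0 ≤ (P.take k).sum

/-- A Dyck path of semilength `n`: a ballot path with `2n` steps ending at level `0`. -/
def IsDyck (n : ℕ) (P : List ℤ) : Prop :=
  IsBallot P ∧ P.length = 2 * n ∧ P.sum = 0

/-- The height of a path: the maximum of its partial sums (`0` for the empty path). -/
def pathHeight (P : List ℤ) : ℤ :=
  (((List.range (P.length + 1)).map fun k => (P.take k).sum).foldr max 0)

/-- The generating function `C = ∑_{n ≥ 1} (catalan n) Xⁿ`. -/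
def catalanSeries : PowerSeries ℚ :=
  PowerSeries.mk fun n => if n = 0 then 0 else (catalan n : ℚ)

/-- `G k` is the generating function for Dyck paths of height at most `k`,
counted by semilength. -/
noncomputable def G (k : ℕ) : PowerSeries ℚ :=
  PowerSeries.mk fun n =>
    (Nat.card {P : List ℤ // IsDyck n P ∧ pathHeight P ≤ (k : ℤ)} : ℚ)

/-!
Let `h i` be the generating function of paths from level `i` down to level `0` inside the strip
`[0, k]`. Splitting off the first step gives the linear recurrence
`h (i + 1) = h i + X * h (i + 2)` with boundary conditions `h 0 = 1 + X * h 1` and `h (k + 1) = 0`.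
Since `C = X * (1 + C) ^ 2`, the characteristic polynomial `X * t ^ 2 - t + 1` has the roots `1 + C`
and `(1 + C) / C`, so both `X * (1 + C) * h (i + 1) - h i` and `h (i + 1) - (1 + C) * h i` are
geometric in `i`. Comparing their values at the two ends of the strip determines `h 0 = G k`.
-/

section Recurrence

variable {R : Type*} [CommRing R] {x c : R} {k : ℕ} {h : ℕ → R}

lemma sub_eq_pow_mul_of_recurrence (hc : c = x * (1 + c) ^ 2)
    (hrec : ∀ i < k, h (i + 1) = h i + x * h (i + 2)) {i : ℕ} (hi : i ≤ k) :
    x * (1 + c) * h (i + 1) - h i = (1 + c) ^ i * (x * (1 + c) * h 1 - h 0) := by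
  induction i with
  | zero => simp
  | succ i ih =>
    rw [pow_succ', mul_assoc (1 + c), ← ih (by lia)]
    linear_combination -(1 + c) * hrec i hi + h (i + 1) * hc

lemma pow_mul_sub_eq_of_recurrence (hc : c = x * (1 + c) ^ 2)
    (hrec : ∀ i < k, h (i + 1) = h i + x * h (i + 2)) {i : ℕ} (hi : i ≤ k) :
    (x * (1 + c)) ^ i * (h (i + 1) - (1 + c) * h i) = h 1 - (1 + c) * h 0 := by
  induction i with
  | zero => simp
  | succ i ih =>
    have step : x * (1 + c) * (h (i + 2) - (1 + c) * h (i + 1)) = h (i + 1) - (1 + c) * h i := by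
      linear_combination -(1 + c) * hrec i hi + h (i + 1) * hc
    rw [pow_succ, mul_assoc, step, ih (by lia)]

lemma one_sub_pow_mul_eq_of_recurrence (hc : c = x * (1 + c) ^ 2) (hbot : h 0 = 1 + x * h 1)
    (hrec : ∀ i < k, h (i + 1) = h i + x * h (i + 2)) (htop : h (k + 1) = 0) :
    (1 - c ^ (k + 2)) * h 0 = (1 + c) * (1 - c ^ (k + 1)) := by
  have hk : h k = (1 + c) ^ k * (1 + c - c * h 0) := by
    have := sub_eq_pow_mul_of_recurrence hc hrec le_rfl
    rw [htop] at this
    linear_combination (1 + c) ^ k * (1 + c) * hbot - this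
  have hends : h 0 - (1 + c) = c ^ (k + 1) * (c * h 0 - (1 + c)) := calc
    h 0 - (1 + c) = x * (1 + c) * (h 1 - (1 + c) * h 0) := by
      linear_combination (1 + c) * hbot - h 0 * hc
    _ = x * (1 + c) * ((x * (1 + c)) ^ k * (h (k + 1) - (1 + c) * h k)) := by
      rw [pow_mul_sub_eq_of_recurrence hc hrec le_rfl]
    _ = (x * (1 + c)) ^ (k + 1) * (1 + c) ^ (k + 1) * (c * h 0 - (1 + c)) := by
      rw [htop, hk]
      ring
    _ = c ^ (k + 1) * (c * h 0 - (1 + c)) := by rw [← mul_pow, mul_assoc x, ← sq, ← hc]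
  linear_combination hends

end Recurrence

lemma one_add_catalanSeries :
    1 + catalanSeries = PowerSeries.catalanSeries.map (Nat.castRingHom ℚ) := by
  ext n
  cases n <;> simp [catalanSeries, PowerSeries.coeff_one]

lemma catalanSeries_eq_X_mul_sq : catalanSeries = PowerSeries.X * (1 + catalanSeries) ^ 2 := by
  have h := congrArg (PowerSeries.map (Nat.castRingHom ℚ))
    PowerSeries.catalanSeries_sq_mul_X_add_one
  simp only [map_add, map_mul, map_pow, map_one, PowerSeries.map_X, ← one_add_catalanSeries] at h
  linear_combination -h

/-- The paths with `m` steps `±1` from level `i` to level `0` all of whose levels, endpoints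
included, lie in `S`. A path is encoded by its list of steps. -/
def pathsToZero (S : Set ℤ) (m : ℕ) (i : ℤ) : Set (List ℤ) :=
  {P | (∀ s ∈ P, s = 1 ∨ s = -1) ∧ P.length = m ∧ i + P.sum = 0 ∧ ∀ j, i + (P.take j).sum ∈ S}

section PathsToZero

variable {S : Set ℤ} {m : ℕ} {i : ℤ}

lemma pathsToZero_eq_empty_of_notMem (hi : i ∉ S) : pathsToZero S m i = ∅ :=
  Set.eq_empty_of_forall_notMem fun _ ⟨_, _, _, hS⟩ ↦ hi (by simpa using hS 0)

lemma pathsToZero_eq_empty_of_lt (hi : (m : ℤ) < i) : pathsToZero S m i = ∅ := by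
  refine Set.eq_empty_of_forall_notMem fun P ⟨hsteps, hlength, hsum, _⟩ ↦ ?_
  have hle := P.card_nsmul_le_sum (-1) fun s hs ↦ by grind
  simp only [hlength, nsmul_eq_mul] at hle
  lia

lemma pathsToZero_zero_zero (h0 : 0 ∈ S) : pathsToZero S 0 0 = {[]} := by
  ext P
  simp only [pathsToZero, Set.mem_ofPred_eq, List.length_eq_zero_iff, Set.mem_singleton_iff]
  exact ⟨fun h ↦ h.2.1, by rintro rfl; simpa using h0⟩

lemma cons_mem_pathsToZero {s : ℤ} {P : List ℤ} :
    s :: P ∈ pathsToZero S (m + 1) i ↔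
      i ∈ S ∧ (s = 1 ∨ s = -1) ∧ P ∈ pathsToZero S m (i + s) := by
  have htake : (∀ j, i + ((s :: P).take j).sum ∈ S) ↔
      i ∈ S ∧ ∀ j, i + s + (P.take j).sum ∈ S := by
    rw [← Nat.and_forall_add_one]
    simp [add_assoc]
  simp only [pathsToZero, Set.mem_ofPred_eq, htake, List.forall_mem_cons, List.length_cons,
    List.sum_cons, add_left_inj, add_assoc]
  tauto

lemma pathsToZero_succ (hi : i ∈ S) :
    pathsToZero S (m + 1) i =
      List.cons 1 '' pathsToZero S m (i + 1) ∪ List.cons (-1) '' pathsToZero S m (i - 1) := by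
  ext P
  cases P with
  | nil => simp [pathsToZero]
  | cons s P =>
    rw [cons_mem_pathsToZero]
    grind

lemma finite_pathsToZero : (pathsToZero S m i).Finite := by
  induction m generalizing i with
  | zero => exact (Set.finite_singleton []).subset fun P hP ↦ List.length_eq_zero_iff.1 hP.2.1
  | succ m ih =>
    by_cases hi : i ∈ S
    · rw [pathsToZero_succ hi]
      exact (ih.image _).union (ih.image _)
    · simp [pathsToZero_eq_empty_of_notMem hi]

lemma ncard_pathsToZero_succ (hi : i ∈ S) :
    (pathsToZero S (m + 1) i).ncard =
      (pathsToZero S m (i + 1)).ncard + (pathsToZero S m (i - 1)).ncard := by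
  have hdisj : Disjoint (List.cons 1 '' pathsToZero S m (i + 1))
      (List.cons (-1) '' pathsToZero S m (i - 1)) := by
    simp [Set.disjoint_left]
  rw [pathsToZero_succ hi, Set.ncard_union_eq hdisj (finite_pathsToZero.image _)
    (finite_pathsToZero.image _), Set.ncard_image_of_injective _ List.cons_injective,
    Set.ncard_image_of_injective _ List.cons_injective]

end PathsToZero

/-- The generating function, by number of up steps, of the paths from level `i` to level `0`
inside `S`; a path with `n` up steps has `n + i` down steps. -/
noncomputable def pathsToZeroSeries (S : Set ℤ) (i : ℕ) : PowerSeries ℚ :=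
  PowerSeries.mk fun n ↦ ((pathsToZero S (2 * n + i) i).ncard : ℚ)

section PathsToZeroSeries

variable {S : Set ℤ} {i : ℕ}

lemma pathsToZeroSeries_eq_zero (hi : (i : ℤ) ∉ S) : pathsToZeroSeries S i = 0 := by
  ext n
  simp [pathsToZeroSeries, pathsToZero_eq_empty_of_notMem hi]

lemma pathsToZeroSeries_zero (h0 : 0 ∈ S) (hneg : -1 ∉ S) :
    pathsToZeroSeries S 0 = 1 + PowerSeries.X * pathsToZeroSeries S 1 := by
  ext n
  cases n with
  | zero => simp [pathsToZeroSeries, pathsToZero_zero_zero h0]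
  | succ n =>
    have hcard := ncard_pathsToZero_succ (m := 2 * n + 1) h0
    simp only [zero_add, zero_sub, pathsToZero_eq_empty_of_notMem hneg, Set.ncard_empty,
      add_zero] at hcard
    simp [pathsToZeroSeries, PowerSeries.coeff_succ_X_mul, PowerSeries.coeff_one, mul_add, hcard]

lemma pathsToZeroSeries_succ (hi : (i + 1 : ℤ) ∈ S) :
    pathsToZeroSeries S (i + 1) =
      pathsToZeroSeries S i + PowerSeries.X * pathsToZeroSeries S (i + 2) := by
  ext n
  cases n with
  | zero =>
    have hcard := ncard_pathsToZero_succ (m := i) hi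
    rw [pathsToZero_eq_empty_of_lt (i := i + 1 + 1) (by lia), Set.ncard_empty, zero_add,
      add_sub_cancel_right] at hcard
    simp [pathsToZeroSeries, hcard]
  | succ n =>
    have hcard : (pathsToZero S (2 * (n + 1) + (i + 1)) (i + 1)).ncard =
        (pathsToZero S (2 * (n + 1) + i) i).ncard +
          (pathsToZero S (2 * n + (i + 2)) (i + 2)).ncard := by
      grind [ncard_pathsToZero_succ (m := 2 * n + (i + 2)) hi]
    simp [pathsToZeroSeries, PowerSeries.coeff_succ_X_mul, hcard]

end PathsToZeroSeries

lemma foldr_max_le_iff {α : Type*} [LinearOrder α] {l : List α} {a b : α} :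
    l.foldr max b ≤ a ↔ b ≤ a ∧ ∀ x ∈ l, x ≤ a := by
  induction l with
  | nil => simp
  | cons y l ih => simp [ih, and_left_comm]

lemma pathHeight_le_iff {P : List ℤ} {b : ℤ} : pathHeight P ≤ b ↔ ∀ j, (P.take j).sum ≤ b := by
  simp only [pathHeight, foldr_max_le_iff, List.forall_mem_map, List.mem_range]
  refine ⟨fun ⟨_, h⟩ j ↦ ?_, fun h ↦ ⟨by simpa using h 0, fun j _ ↦ h j⟩⟩
  rcases le_total j P.length with hj | hj
  · exact h j (by lia)
  · rw [List.take_of_length_le hj, ← P.take_length]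
    exact h P.length (by lia)

lemma isDyck_and_pathHeight_le_iff {n : ℕ} {b : ℤ} {P : List ℤ} :
    IsDyck n P ∧ pathHeight P ≤ b ↔ P ∈ pathsToZero (Set.Icc 0 b) (2 * n) 0 := by
  simp only [IsDyck, IsBallot, pathHeight_le_iff, pathsToZero, Set.mem_ofPred_eq, Set.mem_Icc,
    zero_add, forall_and]
  tauto

lemma G_eq_pathsToZeroSeries (k : ℕ) : G k = pathsToZeroSeries (Set.Icc 0 k) 0 := by
  ext n
  simp only [G, pathsToZeroSeries, PowerSeries.coeff_mk, isDyck_and_pathHeight_le_iff]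
  rfl

theorem G_formula (k : ℕ) :
    (1 - catalanSeries ^ (k + 2)) * G k =
      (1 + catalanSeries) * (1 - catalanSeries ^ (k + 1)) := by
  rw [G_eq_pathsToZeroSeries]
  apply one_sub_pow_mul_eq_of_recurrence (x := PowerSeries.X) (h := pathsToZeroSeries (Set.Icc 0 k))
  · exact catalanSeries_eq_X_mul_sq
  · exact pathsToZeroSeries_zero (by simp) (by simp)
  · exact fun i hi ↦ pathsToZeroSeries_succ ⟨by lia, by lia⟩
  · exact pathsToZeroSeries_eq_zero (by simp)
end
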